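/- arXiv:1801.08276 — 2 statements merged into one kernel-verified Lean document; each statement's English description precedes it below -/
import Mathlib

section
/- Let ε, E_u, σ, L, N_ZC, N_RS, N_SC, α_i be positive real numbers, K ≥ 1 a natural number, and α_1, …, α_K positive real numbers. Define A := Σ_{q=1}^K (α_q/α_i) and B := Σ_{q=1}^K (α_q/α_i²). For each real M > 0 define γ_d(M) := ( B/(M·N_RS) + L/(√M·E_u·N_RS²·N_ZC·α_i²) ) / ( 1/ε − A/M − L/(√M·E_u·N_RS·N_ZC·α_i) ) and P_T(M) := (N_SC·σ²/N_RS)·γ_d(M). Then √M·P_T(M) tends to the positive constant L·N_SC·ε·σ² / (E_u·N_RS³·N_ZC·α_i²) as M → ∞. -/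
open Filter

/-!
Multiplying a quotient `(a / m + b / g) / (c - d / m - e / g)` by `g` turns the numerator into
`a * (g / m) + b`. If `g → ∞` with `g / m → 0`, only `b / c` survives; the theorem is the case
`m = M`, `g = √M`, and any other sublinear growth `g` of the product of array size and uplink power
gives a downlink power decaying like `1 / g`.
-/

open scoped Topology

section OrderedField

variable {ι 𝕜 : Type*} [Field 𝕜] [LinearOrder 𝕜] [IsStrictOrderedRing 𝕜] [TopologicalSpace 𝕜]
  [OrderTopology 𝕜] {l : Filter ι} {m g : ι → 𝕜}

theorem tendsto_mul_div_add_div (a b : 𝕜) (hg : Tendsto g l atTop)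
    (hgm : Tendsto (fun x => g x / m x) l (𝓝 0)) :
    Tendsto (fun x => g x * (a / m x + b / g x)) l (𝓝 b) := by
  have hlim : Tendsto (fun x => a * (g x / m x) + b) l (𝓝 b) := by
    simpa only [mul_zero, zero_add] using (hgm.const_mul a).add_const b
  refine hlim.congr' ?_
  filter_upwards [hg.eventually_ne_atTop 0] with x hx
  rw [mul_add, mul_div_cancel₀ b hx, mul_div_left_comm]

theorem tendsto_sub_div_sub_div (c d e : 𝕜) (hm : Tendsto m l atTop) (hg : Tendsto g l atTop) :
    Tendsto (fun x => c - d / m x - e / g x) l (𝓝 c) := by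
  simpa only [sub_zero] using (hm.const_div_atTop d |>.const_sub c).sub (hg.const_div_atTop e)

theorem tendsto_mul_div_add_div_div_sub (a b d e : 𝕜) {c : 𝕜} (hc : c ≠ 0)
    (hm : Tendsto m l atTop) (hg : Tendsto g l atTop)
    (hgm : Tendsto (fun x => g x / m x) l (𝓝 0)) :
    Tendsto (fun x => g x * ((a / m x + b / g x) / (c - d / m x - e / g x))) l (𝓝 (b / c)) := by
  simpa only [Pi.div_def, mul_div_assoc] using
    (tendsto_mul_div_add_div a b hg hgm).div (tendsto_sub_div_sub_div c d e hm hg) hc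

end OrderedField

theorem tendsto_sqrt_div_self_atTop : Tendsto (fun x : ℝ => √x / x) atTop (𝓝 0) := by
  simpa only [Real.sqrt_div_self, Pi.inv_def] using Real.tendsto_sqrt_atTop.inv_tendsto_atTop

theorem PT_scaling_with_M_general
    {ε Eu NZC NRS αi : ℝ} (σ L NSC A B : ℝ)
    (hε : ε ≠ 0) (hEu : Eu ≠ 0) (hNZC : NZC ≠ 0) (hNRS : NRS ≠ 0) (hαi : αi ≠ 0)
    {g γd PT : ℝ → ℝ} (hg : Tendsto g atTop atTop)
    (hgM : Tendsto (fun M => g M / M) atTop (𝓝 0))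
    (hγd : ∀ M : ℝ, 0 < M →
      γd M = (B / (M * NRS) + L / (g M * Eu * NRS ^ 2 * NZC * αi ^ 2)) /
        (1 / ε - A / M - L / (g M * Eu * NRS * NZC * αi)))
    (hPT : ∀ M : ℝ, 0 < M → PT M = (NSC * σ ^ 2 / NRS) * γd M) :
    Tendsto (fun M => g M * PT M) atTop
      (𝓝 (L * NSC * ε * σ ^ 2 / (Eu * NRS ^ 3 * NZC * αi ^ 2))) := by
  have hlim := (tendsto_mul_div_add_div_div_sub (B / NRS) (L / (Eu * NRS ^ 2 * NZC * αi ^ 2)) A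
    (L / (Eu * NRS * NZC * αi)) (one_div_ne_zero hε) tendsto_id hg hgM).const_mul
      (NSC * σ ^ 2 / NRS)
  have hval : NSC * σ ^ 2 / NRS * (L / (Eu * NRS ^ 2 * NZC * αi ^ 2) / (1 / ε)) =
      L * NSC * ε * σ ^ 2 / (Eu * NRS ^ 3 * NZC * αi ^ 2) := by
    field_simp
  rw [hval] at hlim
  refine hlim.congr' ?_
  filter_upwards [eventually_gt_atTop 0] with M hM
  rw [hPT M hM, hγd M hM, mul_left_comm]
  rw [id_eq]
  ring

/-- Proposition 2: with the per-user uplink power scaled as `1/√M`, the total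
downlink RAR beamforming power `P_T(M)` obtained from solving the SINR equation
for the target `ε` satisfies `√M · P_T(M) → L N_SC ε σ² / (E_u N_RS³ N_ZC α_i²)`
as the number of BS antennas `M → ∞`. -/
theorem PT_scaling_with_M
    (ε Eu σ L NZC NRS NSC αi : ℝ)
    (hε : 0 < ε) (hEu : 0 < Eu) (hσ : 0 < σ) (hL : 0 < L)
    (hNZC : 0 < NZC) (hNRS : 0 < NRS) (hNSC : 0 < NSC) (hαi : 0 < αi)
    (K : ℕ) (hK : 1 ≤ K) (α : Fin K → ℝ) (hα : ∀ q, 0 < α q)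
    (A B : ℝ)
    (hA : A = ∑ q : Fin K, α q / αi)
    (hB : B = ∑ q : Fin K, α q / αi ^ 2)
    (γd PT : ℝ → ℝ)
    (hγd : ∀ M : ℝ, 0 < M →
      γd M = (B / (M * NRS) + L / (Real.sqrt M * Eu * NRS ^ 2 * NZC * αi ^ 2)) /
        (1 / ε - A / M - L / (Real.sqrt M * Eu * NRS * NZC * αi)))
    (hPT : ∀ M : ℝ, 0 < M → PT M = (NSC * σ ^ 2 / NRS) * γd M) :
    Tendsto (fun M : ℝ => Real.sqrt M * PT M) atTop
      (nhds (L * NSC * ε * σ ^ 2 / (Eu * NRS ^ 3 * NZC * αi ^ 2))) := by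
  exact PT_scaling_with_M_general σ L NSC A B hε.ne' hEu.ne' hNZC.ne' hNRS.ne' hαi.ne'
    Real.tendsto_sqrt_atTop tendsto_sqrt_div_self_atTop hγd hPT
end

section
/- Let N be an odd positive integer and u an integer with gcd(u, N) = 1. Define the root Zadoff–Chu sequence s : ℤ → ℂ by s(t) := exp(−iπ·u·t·(t+1)/N). Then for all integers a and b, Σ_{t=0}^{N−1} s(t−a)·conj(s(t−b)) equals N if N divides (a−b), and equals 0 otherwise. -/
/-!
Since `t (t + 1)` is even and `2` is invertible modulo the odd number `N`, the sequence `s` is the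
standard additive character of `ZMod N` evaluated at the quadratic polynomial `c t² + c t`, where
`2 c = -u`. The difference of two translates of a quadratic polynomial is affine, here with slope
`u (a - b)`, so orthogonality of additive characters evaluates the sum: it vanishes unless the slope
does, and `u` is a unit.
-/

theorem sum_range_natCast_zmod {M : Type*} [AddCommMonoid M] (N : ℕ) [NeZero N] (f : ZMod N → M) :
    ∑ t ∈ Finset.range N, f t = ∑ x, f x :=
  Finset.sum_nbij' (fun t ↦ (t : ZMod N)) ZMod.val (fun _ _ ↦ Finset.mem_univ _)
    (fun x _ ↦ Finset.mem_range.mpr x.val_lt)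
    (fun _ ht ↦ ZMod.val_cast_of_lt (Finset.mem_range.mp ht))
    (fun x _ ↦ ZMod.natCast_zmod_val x) (fun _ _ ↦ rfl)

theorem isUnit_two_zmod {N : ℕ} (hN : Odd N) : IsUnit (2 : ZMod N) := by
  exact_mod_cast (ZMod.isUnit_iff_coprime 2 N).mpr (Nat.coprime_two_left.mpr hN)

theorem addChar_quadratic_autocorrelation {R R' : Type*} [CommRing R] [Fintype R]
    [DecidableEq R] [CommRing R'] [IsDomain R'] {ψ : AddChar R R'} (hψ : ψ.IsPrimitive) {c : R}
    (hc : IsUnit (2 * c)) (d a b : R) :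
    ∑ x, ψ (c * (x - a) ^ 2 + d * (x - a)) * ψ (-(c * (x - b) ^ 2 + d * (x - b))) =
      if a = b then (Fintype.card R : R') else 0 := by
  have affine (x : R) : c * (x - a) ^ 2 + d * (x - a) + -(c * (x - b) ^ 2 + d * (x - b)) =
      (d - c * (a + b)) * (b - a) + x * (2 * c * (b - a)) := by ring
  have slope_eq_zero_iff : 2 * c * (b - a) = 0 ↔ a = b := by
    rw [hc.mul_right_eq_zero, sub_eq_zero, eq_comm]
  calc
    _ = ∑ x, ψ ((d - c * (a + b)) * (b - a)) * ψ (x * (2 * c * (b - a))) := by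
      simp only [← AddChar.map_add_eq_mul, affine]
    _ = ψ ((d - c * (a + b)) * (b - a)) * if a = b then (Fintype.card R : R') else 0 := by
      rw [← Finset.mul_sum, AddChar.sum_mulShift _ hψ]
      simp only [slope_eq_zero_iff, Nat.cast_ite, Nat.cast_zero]
    _ = _ := by
      split_ifs with hab
      · rw [hab, sub_self, mul_zero, AddChar.map_zero_eq_one, one_mul]
      · rw [mul_zero]

theorem stdAddChar_eq_exp_of_two_mul_eq {N : ℕ} [NeZero N] (hN : Odd N) {m : ℤ} (hm : Even m)
    {x : ZMod N} (hx : 2 * x = m) :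
    ZMod.stdAddChar x = Complex.exp (Real.pi * Complex.I * m / N) := by
  obtain ⟨k, rfl⟩ := even_iff_exists_two_mul.mp hm
  rw [Int.cast_mul, Int.cast_ofNat] at hx
  obtain rfl : x = k := (isUnit_two_zmod hN).mul_left_cancel hx
  rw [ZMod.stdAddChar_coe]
  congr 1
  push_cast
  ring

theorem exp_zadoffChu_eq_stdAddChar {N : ℕ} [NeZero N] (hN : Odd N) {u : ℤ} {c : ZMod N}
    (hc : 2 * c = -u) (t : ℤ) :
    Complex.exp (-(Real.pi * Complex.I * (u : ℂ) * (t : ℂ) * ((t : ℂ) + 1)) / (N : ℂ)) =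
      ZMod.stdAddChar (c * (t : ZMod N) ^ 2 + c * (t : ZMod N)) := by
  have even_phase : Even (-u * (t * (t + 1))) := (Int.even_mul_succ_self t).mul_left _
  have two_mul_phase : 2 * (c * (t : ZMod N) ^ 2 + c * (t : ZMod N)) =
      (-u * (t * (t + 1)) : ℤ) := by
    push_cast
    linear_combination (t * (t + 1) : ZMod N) * hc
  rw [stdAddChar_eq_exp_of_two_mul_eq hN even_phase two_mul_phase]
  congr 1
  push_cast
  ring

/-- Zero-autocorrelation property (equation (2) and step (b) of (6)) of the
root Zadoff–Chu sequence `s(t) = exp(-iπ u t(t+1)/N)` of odd length `N` with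
`gcd(u, N) = 1`: the circular cross-correlation of two integer shifts of `s`
equals `N` when the shifts agree modulo `N`, and `0` otherwise. -/
theorem zadoff_chu_autocorrelation
    (N : ℕ) (hN : 0 < N) (hNodd : Odd N)
    (u : ℤ) (hu : Int.gcd u (N : ℤ) = 1)
    (s : ℤ → ℂ)
    (hs : ∀ t : ℤ, s t =
      Complex.exp (-(Real.pi * Complex.I * (u : ℂ) * (t : ℂ) * ((t : ℂ) + 1)) / (N : ℂ)))
    (a b : ℤ) :
    ∑ t ∈ Finset.range N, s ((t : ℤ) - a) * (starRingEnd ℂ) (s ((t : ℤ) - b)) =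
      if (N : ℤ) ∣ (a - b) then (N : ℂ) else 0 := by
  have : NeZero N := ⟨hN.ne'⟩
  obtain ⟨c, hc⟩ : ∃ c : ZMod N, -u = 2 * c := (isUnit_two_zmod hNodd).dvd
  have isUnit_two_mul_c : IsUnit (2 * c) := by
    rw [← hc, IsUnit.neg_iff, ZMod.coe_int_isUnit_iff_isCoprime]
    exact (Int.isCoprime_iff_gcd_eq_one.mpr hu).symm
  have s_eq (t : ℤ) : s t = ZMod.stdAddChar (c * (t : ZMod N) ^ 2 + c * (t : ZMod N)) :=
    (hs t).trans (exp_zadoffChu_eq_stdAddChar hNodd hc.symm t)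
  have dvd_sub_iff : (N : ℤ) ∣ a - b ↔ (a : ZMod N) = b := by
    rw [← ZMod.intCast_zmod_eq_zero_iff_dvd, Int.cast_sub, sub_eq_zero]
  have correlation := addChar_quadratic_autocorrelation (ZMod.isPrimitive_stdAddChar N)
    isUnit_two_mul_c c (a : ZMod N) b
  rw [← sum_range_natCast_zmod, ZMod.card] at correlation
  simpa only [s_eq, ← AddChar.map_neg_eq_conj, Int.cast_sub, Int.cast_natCast, dvd_sub_iff]
    using correlation
end
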